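/- Suppose 1 ≤ S < N and let x₀ ∈ X_S with ‖x₀‖₀ = S. Then the MSE of the estimator x̂_c at x₀ equals the closed-form constrained Barankin bound: ε(x₀; x̂_c) = ∫ ‖x̂_c(y) − x₀‖₂² dP_{x₀}(y) = S σ² + (N − S) σ² · (1 − ∏_{l ∈ supp(x₀)} g(x₀_l; σ²)). -/

import Mathlib

open MeasureTheory ProbabilityTheory Filter
open scoped ENNReal Classical

/-- The product Gaussian measure `P_x` on `ℝ^N` with mean `x` and variance `σ²` per coordinate. -/
noncomputable def gaussP (N : ℕ) (σ : ℝ) (x : Fin N → ℝ) : Measure (Fin N → ℝ) :=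
  MeasureTheory.Measure.pi fun i => gaussianReal (x i) (Real.toNNReal (σ ^ 2))

/-- The support of `x`: indices with nonzero entries. Its cardinality is `‖x‖₀`. -/
noncomputable def supp {N : ℕ} (x : Fin N → ℝ) : Finset (Fin N) :=
  Finset.univ.filter fun i => x i ≠ 0

/-- The sparse parameter set `X_S = {x : ‖x‖₀ ≤ S}`. -/
def sparseSet (N S : ℕ) : Set (Fin N → ℝ) := {x | (supp x).card ≤ S}

/-- An estimator is unbiased if each component is `P_x`-integrable with mean `x i`
for every `x ∈ X_S`. -/
def Unbiased (N S : ℕ) (σ : ℝ) (est : (Fin N → ℝ) → Fin N → ℝ) : Prop :=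
  ∀ x ∈ sparseSet N S, ∀ i,
    Integrable (fun y => est y i) (gaussP N σ x) ∧
    (∫ y, est y i ∂gaussP N σ x) = x i

/-- The MSE `ε(x; x̂) = ∫ ‖x̂(y) − x‖₂² dP_x(y)`, as an extended real. -/
noncomputable def MSE (N : ℕ) (σ : ℝ) (est : (Fin N → ℝ) → Fin N → ℝ)
    (x : Fin N → ℝ) : ℝ≥0∞ :=
  ∫⁻ y, ENNReal.ofReal (∑ i, (est y i - x i) ^ 2) ∂gaussP N σ x

/-- The constrained estimator `x̂_c`: identity on `supp(x₀)`, and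
`y_k (1 − ∏_{l ∈ supp(x₀)} tanh(y_l x₀_l/σ²))` off the support. -/
noncomputable def estC (N : ℕ) (σ : ℝ) (x₀ : Fin N → ℝ) (y : Fin N → ℝ) (k : Fin N) : ℝ :=
  if k ∈ supp x₀ then y k
  else y k * (1 - ∏ l ∈ supp x₀, Real.tanh (y l * x₀ l / σ ^ 2))


/-- `g(x; σ²) = (2/√(2πσ²)) ∫₀^∞ exp(−(y²+x²)/(2σ²)) sinh(yx/σ²) tanh(yx/σ²) dy`. -/
noncomputable def g (σ x : ℝ) : ℝ :=
  (2 / Real.sqrt (2 * Real.pi * σ ^ 2)) *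
    ∫ y in Set.Ioi (0 : ℝ),
      Real.exp (-(y ^ 2 + x ^ 2) / (2 * σ ^ 2)) * Real.sinh (y * x / σ ^ 2) *
        Real.tanh (y * x / σ ^ 2)

/-! Fix `k ∉ supp x₀`. The error of `x̂_c` in coordinate `k` is `y_k (1 - P)` with
`P = ∏_{l ∈ supp x₀} tanh (y_l x₀_l / σ²)`, and `P` does not involve `y_k`. By independence the
mean squared error is `σ² E[(1 - P)²] = σ² (1 - 2 E[P] + E[P²])`, and `E[P]` and `E[P²]` factor
over the support. Expanding the square in the exponent turns the density of `N(x, σ²)` into an even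
function of `y` times `exp (y x / σ²)`, so only the symmetrization `e^u φ(u) + e^(-u) φ(-u)` of a
test function `φ` matters. It is `2 sinh u tanh u` for `φ = tanh` as well as for `φ = tanh²`: both
moments equal `g(x; σ²)`, and the mean squared error is `σ² (1 - ∏ g(x₀_l; σ²))`. -/

section Hyperbolic

theorem continuous_real_tanh : Continuous Real.tanh := by
  rw [funext Real.tanh_eq_sinh_div_cosh]
  exact Real.continuous_sinh.div Real.continuous_cosh fun x => (Real.cosh_pos x).ne'

theorem exp_mul_tanh_add_exp_neg_mul_tanh_neg (u : ℝ) :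
    Real.exp u * Real.tanh u + Real.exp (-u) * Real.tanh (-u) =
      2 * (Real.sinh u * Real.tanh u) := by
  rw [Real.tanh_neg, Real.sinh_eq]
  ring

theorem exp_mul_tanh_sq_add_exp_neg_mul_tanh_neg_sq (u : ℝ) :
    Real.exp u * Real.tanh u ^ 2 + Real.exp (-u) * Real.tanh (-u) ^ 2 =
      2 * (Real.sinh u * Real.tanh u) := by
  have tanh_mul_cosh : Real.tanh u * Real.cosh u = Real.sinh u := by
    rw [Real.tanh_eq_sinh_div_cosh, div_mul_cancel₀ _ (Real.cosh_pos u).ne']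
  rw [← tanh_mul_cosh, Real.tanh_neg, Real.cosh_eq]
  ring

end Hyperbolic

section Gaussian

open scoped NNReal

theorem integral_eq_integral_Ioi_add_comp_neg {E : Type*} [NormedAddCommGroup E]
    [NormedSpace ℝ E] {f : ℝ → E} (hf : Integrable f) :
    ∫ y, f y = ∫ y in Set.Ioi 0, (f y + f (-y)) := by
  rw [integral_add hf.integrableOn hf.comp_neg.integrableOn, integral_comp_neg_Ioi, neg_zero,
    add_comm, intervalIntegral.integral_Iic_add_Ioi hf.integrableOn hf.integrableOn]

theorem gaussianPDFReal_eq_mul_exp_mul_div (m : ℝ) (v : ℝ≥0) (y : ℝ) :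
    gaussianPDFReal m v y =
      (√(2 * Real.pi * v))⁻¹ * Real.exp (-(y ^ 2 + m ^ 2) / (2 * v)) * Real.exp (y * m / v) := by
  rw [gaussianPDFReal, mul_assoc _ (Real.exp _), ← Real.exp_add]
  congr 2
  ring

theorem integral_gaussianReal_comp_mul_div {m : ℝ} {v : ℝ≥0} (hv : v ≠ 0) {φ : ℝ → ℝ}
    (hφ : AEStronglyMeasurable (fun y => φ (y * m / v))) {C : ℝ} (hC : ∀ u, ‖φ u‖ ≤ C) :
    ∫ y, φ (y * m / v) ∂gaussianReal m v =
      (√(2 * Real.pi * v))⁻¹ * ∫ y in Set.Ioi 0, Real.exp (-(y ^ 2 + m ^ 2) / (2 * v)) *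
        (Real.exp (y * m / v) * φ (y * m / v) + Real.exp (-(y * m / v)) * φ (-(y * m / v))) := by
  have integrable_density_mul :
      Integrable fun y => gaussianPDFReal m v y • φ (y * m / v) :=
    (integrable_gaussianPDFReal m v).mul_bdd hφ (ae_of_all _ fun y => hC _)
  rw [integral_gaussianReal_eq_integral_smul hv,
    integral_eq_integral_Ioi_add_comp_neg integrable_density_mul, ← integral_const_mul]
  congr 1 with y
  simp only [gaussianPDFReal_eq_mul_exp_mul_div, smul_eq_mul, neg_sq, neg_mul, neg_div]
  ring

theorem integral_gaussianReal_comp_eq_g {σ : ℝ} (hσ : σ ≠ 0) (x : ℝ) {φ : ℝ → ℝ} (hφ : Measurable φ)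
    {C : ℝ} (hC : ∀ u, ‖φ u‖ ≤ C)
    (hsymm : ∀ u, Real.exp u * φ u + Real.exp (-u) * φ (-u) =
      2 * (Real.sinh u * Real.tanh u)) :
    ∫ y, φ (y * x / σ ^ 2) ∂gaussianReal x (σ ^ 2).toNNReal = g σ x := by
  have variance_ne_zero : (σ ^ 2).toNNReal ≠ 0 := by simpa using hσ
  have h := integral_gaussianReal_comp_mul_div (m := x) variance_ne_zero
    (hφ.comp (by fun_prop)).aestronglyMeasurable hC
  simp only [Real.coe_toNNReal _ (sq_nonneg σ), hsymm] at h
  rw [h, g, ← integral_const_mul, ← integral_const_mul]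
  congr 1 with y
  ring

theorem integral_tanh_gaussianReal {σ : ℝ} (hσ : σ ≠ 0) (x : ℝ) :
    ∫ y, Real.tanh (y * x / σ ^ 2) ∂gaussianReal x (σ ^ 2).toNNReal = g σ x :=
  integral_gaussianReal_comp_eq_g hσ x continuous_real_tanh.measurable
    (fun u => (Real.abs_tanh_lt_one u).le) exp_mul_tanh_add_exp_neg_mul_tanh_neg

theorem integral_tanh_sq_gaussianReal {σ : ℝ} (hσ : σ ≠ 0) (x : ℝ) :
    ∫ y, Real.tanh (y * x / σ ^ 2) ^ 2 ∂gaussianReal x (σ ^ 2).toNNReal = g σ x :=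
  integral_gaussianReal_comp_eq_g (φ := fun u => Real.tanh u ^ 2) (C := 1) hσ x
    (continuous_real_tanh.pow 2).measurable
    (fun u => by rw [Real.norm_of_nonneg (sq_nonneg _)]; exact (Real.tanh_sq_lt_one u).le)
    exp_mul_tanh_sq_add_exp_neg_mul_tanh_neg_sq

theorem integral_sub_sq_gaussianReal (m : ℝ) (v : ℝ≥0) :
    ∫ y, (y - m) ^ 2 ∂gaussianReal m v = v := by
  rw [← variance_fun_id_gaussianReal (μ := m), variance_eq_integral (by fun_prop),
    integral_id_gaussianReal]

end Gaussian

section ProductMeasure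

variable {ι : Type*} [Fintype ι] {X : ι → Type*} [∀ i, MeasurableSpace (X i)]
  {μ : ∀ i, Measure (X i)} [∀ i, IsProbabilityMeasure (μ i)]

theorem integral_finsetProd_comp_eval_pi {𝕜 : Type*} [RCLike 𝕜] (s : Finset ι)
    (f : ∀ i, X i → 𝕜) :
    ∫ y, ∏ i ∈ s, f i (y i) ∂Measure.pi μ = ∏ i ∈ s, ∫ t, f i t ∂μ i := by
  have h := integral_fintype_prod_eq_prod (μ := μ) fun i t => if i ∈ s then f i t else 1
  have integral_ite (i : ι) :
      ∫ t, (if i ∈ s then f i t else 1) ∂μ i = if i ∈ s then ∫ t, f i t ∂μ i else 1 := by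
    split_ifs <;> simp
  simpa only [integral_ite, Finset.prod_ite_mem, Finset.univ_inter] using h

theorem indepFun_eval_restrict_pi {k : ι} {s : Finset ι} (hk : k ∉ s) :
    IndepFun (fun y => y k) s.restrict (Measure.pi μ) :=
  ((iIndepFun_pi (X := fun _ => id) fun _ => aemeasurable_id).indepFun_finset {k} s
    (Finset.disjoint_singleton_left.2 hk) measurable_pi_apply).comp
    (measurable_pi_apply (⟨k, Finset.mem_singleton_self k⟩ : ({k} : Finset ι))) measurable_id

end ProductMeasure

section Estimator

variable {N : ℕ} {σ : ℝ} {x : Fin N → ℝ} {k : Fin N} {s : Finset (Fin N)}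

instance (N : ℕ) (σ : ℝ) (x : Fin N → ℝ) : IsProbabilityMeasure (gaussP N σ x) := by
  unfold gaussP
  infer_instance

theorem MSE_eq_ofReal_sum_integral {est : (Fin N → ℝ) → Fin N → ℝ}
    (h : ∀ k, Integrable (fun y => (est y k - x k) ^ 2) (gaussP N σ x)) :
    MSE N σ est x = ENNReal.ofReal (∑ k, ∫ y, (est y k - x k) ^ 2 ∂gaussP N σ x) := by
  rw [← integral_finsetSum _ fun k _ => h k, MSE,
    ofReal_integral_eq_lintegral_ofReal (integrable_finsetSum _ fun k _ => h k)
      (ae_of_all _ fun y => Finset.sum_nonneg fun k _ => sq_nonneg _)]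

theorem integrable_eval_sub_sq_gaussP (σ : ℝ) (x : Fin N → ℝ) (k : Fin N) :
    Integrable (fun y => (y k - x k) ^ 2) (gaussP N σ x) :=
  integrable_comp_eval (X := fun _ => ℝ) (f := fun t => (t - x k) ^ 2)
    ((memLp_id_gaussianReal 2).sub (memLp_const (x k))).integrable_sq

theorem integral_eval_sub_sq_gaussP (σ : ℝ) (x : Fin N → ℝ) (k : Fin N) :
    ∫ y, (y k - x k) ^ 2 ∂gaussP N σ x = σ ^ 2 := by
  rw [gaussP, integral_comp_eval (X := fun _ => ℝ) (f := fun t => (t - x k) ^ 2) (by fun_prop),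
    integral_sub_sq_gaussianReal, Real.coe_toNNReal _ (sq_nonneg σ)]

/-- The product `∏_{l ∈ s} tanh (y_l x_l / σ²)`. For `s = supp x₀` and `x = x₀` this is the
factor by which `x̂_c` corrects the coordinates off the support. -/
noncomputable def tanhProd (σ : ℝ) (x : Fin N → ℝ) (s : Finset (Fin N)) (y : Fin N → ℝ) : ℝ :=
  ∏ l ∈ s, Real.tanh (y l * x l / σ ^ 2)

theorem continuous_tanhProd : Continuous (tanhProd σ x s) :=
  continuous_finsetProd s fun l _ => continuous_real_tanh.comp (by fun_prop)

theorem abs_tanhProd_le_one (y : Fin N → ℝ) : |tanhProd σ x s y| ≤ 1 := by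
  rw [tanhProd, Finset.abs_prod]
  exact Finset.prod_le_one (fun l _ => abs_nonneg _) fun l _ => (Real.abs_tanh_lt_one _).le

theorem memLp_tanhProd (p : ℝ≥0∞) : MemLp (tanhProd σ x s) p (gaussP N σ x) :=
  MemLp.of_bound continuous_tanhProd.aestronglyMeasurable 1 (ae_of_all _ abs_tanhProd_le_one)

theorem integral_tanhProd (hσ : σ ≠ 0) :
    ∫ y, tanhProd σ x s y ∂gaussP N σ x = ∏ l ∈ s, g σ (x l) := by
  simp only [tanhProd, gaussP,
    integral_finsetProd_comp_eval_pi s fun l t => Real.tanh (t * x l / σ ^ 2),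
    integral_tanh_gaussianReal hσ]

theorem integral_tanhProd_sq (hσ : σ ≠ 0) :
    ∫ y, tanhProd σ x s y ^ 2 ∂gaussP N σ x = ∏ l ∈ s, g σ (x l) := by
  simp only [tanhProd, gaussP, ← Finset.prod_pow,
    integral_finsetProd_comp_eval_pi s fun l t => Real.tanh (t * x l / σ ^ 2) ^ 2,
    integral_tanh_sq_gaussianReal hσ]

theorem integrable_one_sub_tanhProd_sq :
    Integrable (fun y => (1 - tanhProd σ x s y) ^ 2) (gaussP N σ x) :=
  ((memLp_const 1).sub (memLp_tanhProd 2)).integrable_sq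

theorem integral_one_sub_tanhProd_sq (hσ : σ ≠ 0) :
    ∫ y, (1 - tanhProd σ x s y) ^ 2 ∂gaussP N σ x = 1 - ∏ l ∈ s, g σ (x l) := by
  have integrable_tanhProd : Integrable (tanhProd σ x s) (gaussP N σ x) :=
    (memLp_tanhProd 1).integrable le_rfl
  have integrable_sq : Integrable (fun y => tanhProd σ x s y ^ 2) (gaussP N σ x) :=
    (memLp_tanhProd 2).integrable_sq
  have integrable_affine : Integrable (fun y => 1 - 2 * tanhProd σ x s y) (gaussP N σ x) :=
    (integrable_const 1).sub (integrable_tanhProd.const_mul 2)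
  calc ∫ y, (1 - tanhProd σ x s y) ^ 2 ∂gaussP N σ x
      = ∫ y, (1 - 2 * tanhProd σ x s y + tanhProd σ x s y ^ 2) ∂gaussP N σ x := by
        congr 1 with y
        ring
    _ = 1 - 2 * ∫ y, tanhProd σ x s y ∂gaussP N σ x + ∫ y, tanhProd σ x s y ^ 2 ∂gaussP N σ x := by
        rw [integral_add integrable_affine integrable_sq,
          integral_sub (integrable_const 1) (integrable_tanhProd.const_mul 2), integral_const_mul,
          integral_const, probReal_univ, one_smul]
    _ = 1 - ∏ l ∈ s, g σ (x l) := by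
        rw [integral_tanhProd hσ, integral_tanhProd_sq hσ]
        ring

theorem indepFun_eval_tanhProd (hk : k ∉ s) :
    IndepFun (fun y => y k) (tanhProd σ x s) (gaussP N σ x) := by
  have measurable_prod :
      Measurable fun z : s → ℝ => ∏ l : s, Real.tanh (z l * x l / σ ^ 2) :=
    Finset.measurable_fun_prod _ fun l _ => continuous_real_tanh.measurable.comp (by fun_prop)
  have tanhProd_eq_comp_restrict : tanhProd σ x s =
      (fun z : s → ℝ => ∏ l : s, Real.tanh (z l * x l / σ ^ 2)) ∘ s.restrict :=
    funext fun y => (Finset.prod_coe_sort s fun l => Real.tanh (y l * x l / σ ^ 2)).symm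
  rw [tanhProd_eq_comp_restrict]
  exact (indepFun_eval_restrict_pi hk).comp measurable_id measurable_prod

theorem indepFun_eval_sub_sq_one_sub_tanhProd_sq (hk : k ∉ s) :
    IndepFun (fun y => (y k - x k) ^ 2) (fun y => (1 - tanhProd σ x s y) ^ 2) (gaussP N σ x) :=
  (indepFun_eval_tanhProd hk).comp (φ := fun t => (t - x k) ^ 2) (ψ := fun t => (1 - t) ^ 2)
    (by fun_prop) (by fun_prop)

theorem estC_sub_of_mem (hk : k ∈ supp x) (y : Fin N → ℝ) :
    estC N σ x y k - x k = y k - x k := by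
  rw [estC, if_pos hk]

theorem estC_sub_of_notMem (hk : k ∉ supp x) (y : Fin N → ℝ) :
    estC N σ x y k - x k = (y k - x k) * (1 - tanhProd σ x (supp x) y) := by
  have x_k_eq_zero : x k = 0 := by simpa [supp] using hk
  rw [estC, if_neg hk, x_k_eq_zero, sub_zero, sub_zero, tanhProd]

theorem integrable_estC_sub_sq (σ : ℝ) (x : Fin N → ℝ) (k : Fin N) :
    Integrable (fun y => (estC N σ x y k - x k) ^ 2) (gaussP N σ x) := by
  by_cases hk : k ∈ supp x
  · simpa only [estC_sub_of_mem hk] using integrable_eval_sub_sq_gaussP σ x k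
  · simp only [estC_sub_of_notMem hk, mul_pow]
    exact (indepFun_eval_sub_sq_one_sub_tanhProd_sq hk).integrable_mul
      (integrable_eval_sub_sq_gaussP σ x k) integrable_one_sub_tanhProd_sq

theorem integral_estC_sub_sq_of_mem (hk : k ∈ supp x) :
    ∫ y, (estC N σ x y k - x k) ^ 2 ∂gaussP N σ x = σ ^ 2 := by
  simp only [estC_sub_of_mem hk, integral_eval_sub_sq_gaussP]

theorem integral_estC_sub_sq_of_notMem (hσ : σ ≠ 0) (hk : k ∉ supp x) :
    ∫ y, (estC N σ x y k - x k) ^ 2 ∂gaussP N σ x =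
      σ ^ 2 * (1 - ∏ l ∈ supp x, g σ (x l)) := by
  simp only [estC_sub_of_notMem hk, mul_pow]
  rw [(indepFun_eval_sub_sq_one_sub_tanhProd_sq hk).integral_fun_mul_eq_mul_integral
      (integrable_eval_sub_sq_gaussP σ x k).aestronglyMeasurable
      integrable_one_sub_tanhProd_sq.aestronglyMeasurable,
    integral_eval_sub_sq_gaussP, integral_one_sub_tanhProd_sq hσ]

end Estimator

/-- The MSE of `x̂_c` at `x₀` equals the closed-form constrained Barankin bound. -/
theorem stmt_7 (N S : ℕ) (σ : ℝ) (hσ : 0 < σ) (hS : 1 ≤ S) (hSN : S < N)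
    (x₀ : Fin N → ℝ) (hcard : (supp x₀).card = S) :
    MSE N σ (estC N σ x₀) x₀ = ENNReal.ofReal ((S : ℝ) * σ ^ 2 +
      ((N : ℝ) - S) * σ ^ 2 * (1 - ∏ l ∈ supp x₀, g σ (x₀ l))) := by
  rw [MSE_eq_ofReal_sum_integral (integrable_estC_sub_sq σ x₀)]
  congr 1
  calc ∑ k, ∫ y, (estC N σ x₀ y k - x₀ k) ^ 2 ∂gaussP N σ x₀
      = ∑ _k ∈ supp x₀, σ ^ 2 +
          ∑ _k ∈ (supp x₀)ᶜ, σ ^ 2 * (1 - ∏ l ∈ supp x₀, g σ (x₀ l)) := by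
        rw [← Finset.sum_add_sum_compl (supp x₀)]
        congr 1
        · exact Finset.sum_congr rfl fun k hk => integral_estC_sub_sq_of_mem hk
        · exact Finset.sum_congr rfl fun k hk =>
            integral_estC_sub_sq_of_notMem hσ.ne' (Finset.mem_compl.1 hk)
    _ = S * σ ^ 2 + (N - S) * σ ^ 2 * (1 - ∏ l ∈ supp x₀, g σ (x₀ l)) := by
        rw [Finset.sum_const, Finset.sum_const, Finset.card_compl, hcard, Fintype.card_fin,
          nsmul_eq_mul, nsmul_eq_mul, Nat.cast_sub hSN.le, mul_assoc]
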